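/- (Proposition 3.) Let A = (A₁, A₂) be a pure commuting 2-contraction on H such that D_{A*} is injective, and let (z₁,z₂) ∈ 𝔻². Then (z₁,z₂) ∈ σ_T^{(2)}(A) if and only if there exists X = (x₁,x₂) ∈ H ⊕ H such that θ_A(z₁,z₂)(D_A X) = 0 and X ≠ ((A₁ − z₁)h, (z₂ − A₂)h) for every h ∈ H. -/

import Mathlib

open ContinuousLinearMap Filter

/-!
Positive square roots inherit intertwining relations, so `A (1 - A*A) = (1 - AA*) A` gives
`A D_A = D_{A*} A`. Writing `Z` for the row operator `(z₁, z₂)`, it follows that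
`θ_A(z) D_A = D_{A*} (1 - Z A*)⁻¹ (Z - A)`. As `D_{A*}` and `(1 - Z A*)⁻¹` are injective,
`θ_A(z) D_A X = 0` exactly when `A X = Z X`, that is, when `(A₁ - z₁) x₁ + (A₂ - z₂) x₂ = 0`. The
sign change `(x₁, x₂) ↦ (x₁, -x₂)` turns this into the middle Koszul condition.
-/

section Intertwining

variable {H K : Type*} [NormedAddCommGroup H] [InnerProductSpace ℂ H] [CompleteSpace H]
  [NormedAddCommGroup K] [InnerProductSpace ℂ K] [CompleteSpace K]
  {S : H →L[ℂ] H} {T : K →L[ℂ] K}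

/- `-Y*SY = (Y*Y)T` is negative, but also positive as a product of commuting positive operators. -/
theorem comp_eq_zero_of_comp_eq_neg_comp (hS : 0 ≤ S) (hT : 0 ≤ T) {Y : K →L[ℂ] H}
    (h : S ∘L Y = -(Y ∘L T)) : Y ∘L T = 0 := by
  have hS' : S.IsPositive := (nonneg_iff_isPositive S).mp hS
  have hTa : adjoint T = T := ((nonneg_iff_isPositive T).mp hT).isSelfAdjoint.adjoint_eq
  have hGT : (adjoint Y ∘L Y) * T = -(adjoint Y ∘L S ∘L Y) := by
    rw [h, comp_neg, neg_neg, mul_def, comp_assoc]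
  have hTG : T * (adjoint Y ∘L Y) = -(adjoint Y ∘L S ∘L Y) := by
    simpa [mul_def, comp_assoc, adjoint_comp, hTa, hS'.isSelfAdjoint.adjoint_eq] using
      congrArg adjoint hGT
  have hG : 0 ≤ adjoint Y ∘L Y :=
    (nonneg_iff_isPositive _).mpr (isPositive_adjoint_comp_self Y)
  have hTG_nonneg : 0 ≤ T * (adjoint Y ∘L Y) :=
    Commute.mul_nonneg hT hG (hTG.trans hGT.symm)
  have hTG_nonpos : T * (adjoint Y ∘L Y) ≤ 0 := by
    rw [hTG, neg_nonpos, nonneg_iff_isPositive]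
    exact hS'.adjoint_conj Y
  have hTG_zero : T ∘L adjoint Y ∘L Y = 0 := le_antisymm hTG_nonpos hTG_nonneg
  rw [← adjoint_comp_self_eq_zero_iff, adjoint_comp, hTa, comp_assoc, ← comp_assoc (adjoint Y),
    ← comp_assoc, hTG_zero, zero_comp]

theorem comp_eq_comp_of_mul_self_comp_eq (hS : 0 ≤ S) (hT : 0 ≤ T) {B : K →L[ℂ] H}
    (h : (S * S) ∘L B = B ∘L (T * T)) : S ∘L B = B ∘L T := by
  have hSa : adjoint S = S := ((nonneg_iff_isPositive S).mp hS).isSelfAdjoint.adjoint_eq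
  have hTa : adjoint T = T := ((nonneg_iff_isPositive T).mp hT).isSelfAdjoint.adjoint_eq
  set Y := S ∘L B - B ∘L T with hY
  have hSY : S ∘L Y = -(Y ∘L T) := by
    rw [hY, comp_sub, sub_comp, ← comp_assoc, ← mul_def, h, comp_assoc, comp_assoc, ← mul_def,
      neg_sub]
  have hYT_zero : Y ∘L T = 0 := comp_eq_zero_of_comp_eq_neg_comp hS hT hSY
  have hSY_zero : S ∘L Y = 0 := by rw [hSY, hYT_zero, neg_zero]
  have hYY : adjoint Y ∘L Y = -(T ∘L adjoint B ∘L Y) := by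
    nth_rw 1 [hY]
    rw [map_sub, adjoint_comp, adjoint_comp, hSa, hTa, sub_comp, comp_assoc, hSY_zero, comp_zero,
      zero_sub, comp_assoc]
  have hYYY : Y ∘L adjoint Y ∘L Y = 0 := by
    rw [hYY, comp_neg, ← comp_assoc, hYT_zero, zero_comp, neg_zero]
  have hYY_zero : adjoint Y ∘L Y = 0 := by
    rw [← adjoint_comp_self_eq_zero_iff, adjoint_comp, adjoint_adjoint, comp_assoc, hYYY, comp_zero]
  exact sub_eq_zero.mp (adjoint_comp_self_eq_zero_iff.mp hYY_zero)

end Intertwining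

section CharacteristicFunction

variable {𝕜 H K : Type*} [RCLike 𝕜] [NormedAddCommGroup H] [InnerProductSpace 𝕜 H]
  [NormedAddCommGroup K] [InnerProductSpace 𝕜 K]

/-- `D` is the defect operator `D_A = (1 - A*A)^{1/2}`. It is encoded by the two properties that
determine it; its existence forces `A` to be a contraction. -/
structure IsDefectOperator [CompleteSpace H] [CompleteSpace K] (A : K →L[𝕜] H) (D : K →L[𝕜] K) :
    Prop where
  nonneg : 0 ≤ D
  mul_self : D * D = 1 - adjoint A ∘L A

/-- The value `θ_A(Z) = -A + D_{A*} (1 - Z A*)⁻¹ Z D_A` of the characteristic function of `A`,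
which depends on the point `z` only through the operator `Z`. The defect operators `D_{A*}` and
`D_A` and the inverse `R` of `1 - Z A*` are parameters. -/
def characteristicFunction (A Z : K →L[𝕜] H) (Dstar R : H →L[𝕜] H) (D : K →L[𝕜] K) : K →L[𝕜] H :=
  -A + Dstar ∘L R ∘L Z ∘L D

end CharacteristicFunction

section DefectIdentities

variable {H K : Type*} [NormedAddCommGroup H] [InnerProductSpace ℂ H] [CompleteSpace H]
  [NormedAddCommGroup K] [InnerProductSpace ℂ K] [CompleteSpace K]
  {A Z : K →L[ℂ] H} {Dstar R : H →L[ℂ] H} {D : K →L[ℂ] K}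

theorem IsDefectOperator.adjoint_defect_comp (hDstar : IsDefectOperator (adjoint A) Dstar)
    (hD : IsDefectOperator A D) : Dstar ∘L A = A ∘L D := by
  refine comp_eq_comp_of_mul_self_comp_eq hDstar.nonneg hD.nonneg ?_
  rw [hDstar.mul_self, hD.mul_self, adjoint_adjoint, sub_comp, comp_sub, comp_assoc, one_def,
    one_def, id_comp, comp_id]

theorem characteristicFunction_comp_defect (hDstar : IsDefectOperator (adjoint A) Dstar)
    (hD : IsDefectOperator A D) (hR : R * (1 - Z ∘L adjoint A) = 1) :
    characteristicFunction A Z Dstar R D ∘L D = Dstar ∘L R ∘L (Z - A) := by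
  have hRA : R ∘L (A - Z ∘L adjoint A ∘L A) = A := by
    simpa [mul_def, sub_comp, comp_sub, comp_assoc, one_def] using congrArg (· ∘L A) hR
  have hZ : Z ∘L (D * D) = (Z - A) + (A - Z ∘L adjoint A ∘L A) := by
    rw [hD.mul_self, comp_sub, one_def, comp_id, sub_add_sub_cancel]
  calc characteristicFunction A Z Dstar R D ∘L D
      = -(A ∘L D) + Dstar ∘L R ∘L Z ∘L (D * D) := by
        simp only [characteristicFunction, add_comp, neg_comp, comp_assoc, mul_def]
    _ = Dstar ∘L R ∘L (Z - A) := by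
        rw [hZ, comp_add R, hRA, comp_add, hDstar.adjoint_defect_comp hD,
          neg_add_cancel_comm_assoc]

theorem characteristicFunction_defect_apply_eq_zero_iff
    (hDstar : IsDefectOperator (adjoint A) Dstar) (hDstar_inj : Function.Injective Dstar)
    (hD : IsDefectOperator A D) (hR₁ : R * (1 - Z ∘L adjoint A) = 1)
    (hR₂ : (1 - Z ∘L adjoint A) * R = 1) (x : K) :
    characteristicFunction A Z Dstar R D (D x) = 0 ↔ A x = Z x := by
  have hR_inj : Function.Injective R :=
    Function.LeftInverse.injective (g := ⇑(1 - Z ∘L adjoint A)) fun y => DFunLike.congr_fun hR₂ y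
  have hfactor : characteristicFunction A Z Dstar R D (D x) = Dstar (R (Z x - A x)) :=
    DFunLike.congr_fun (characteristicFunction_comp_defect hDstar hD hR₁) x
  rw [hfactor, map_eq_zero_iff Dstar hDstar_inj, map_eq_zero_iff R hR_inj, sub_eq_zero, eq_comm]

end DefectIdentities

section RowOperator

variable {𝕜 E₁ E₂ F : Type*} [RCLike 𝕜]

section NormedSpace

variable [NormedAddCommGroup E₁] [NormedSpace 𝕜 E₁] [NormedAddCommGroup E₂] [NormedSpace 𝕜 E₂]
  [NormedAddCommGroup F] [NormedSpace 𝕜 F]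

/-- The row operator `(x₁, x₂) ↦ B₁ x₁ + B₂ x₂` on the `ℓ²` direct sum, so that a pair of operators,
or of scalars, becomes a single operator. -/
noncomputable def rowOperator (B₁ : E₁ →L[𝕜] F) (B₂ : E₂ →L[𝕜] F) :
    WithLp 2 (E₁ × E₂) →L[𝕜] F :=
  B₁.coprod B₂ ∘L (WithLp.prodContinuousLinearEquiv 2 𝕜 E₁ E₂ : WithLp 2 (E₁ × E₂) →L[𝕜] E₁ × E₂)

theorem rowOperator_apply (B₁ : E₁ →L[𝕜] F) (B₂ : E₂ →L[𝕜] F) (x : WithLp 2 (E₁ × E₂)) :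
    rowOperator B₁ B₂ x = B₁ x.fst + B₂ x.snd :=
  rfl

theorem eq_rowOperator {B₁ : E₁ →L[𝕜] F} {B₂ : E₂ →L[𝕜] F} {B : WithLp 2 (E₁ × E₂) →L[𝕜] F}
    (hB : ∀ x y, B ((WithLp.equiv 2 (E₁ × E₂)).symm (x, y)) = B₁ x + B₂ y) :
    B = rowOperator B₁ B₂ :=
  ContinuousLinearMap.ext fun x => hB x.fst x.snd

end NormedSpace

variable [NormedAddCommGroup E₁] [InnerProductSpace 𝕜 E₁] [CompleteSpace E₁]
  [NormedAddCommGroup E₂] [InnerProductSpace 𝕜 E₂] [CompleteSpace E₂]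
  [NormedAddCommGroup F] [InnerProductSpace 𝕜 F] [CompleteSpace F]

theorem adjoint_rowOperator_apply (B₁ : E₁ →L[𝕜] F) (B₂ : E₂ →L[𝕜] F) (y : F) :
    adjoint (rowOperator B₁ B₂) y = WithLp.toLp 2 (adjoint B₁ y, adjoint B₂ y) := by
  refine ext_inner_right 𝕜 fun x => ?_
  simp only [adjoint_inner_left, rowOperator_apply, inner_add_right, WithLp.prod_inner_apply,
    WithLp.ofLp_fst, WithLp.ofLp_snd]

theorem rowOperator_comp_adjoint_rowOperator {G : Type*} [NormedAddCommGroup G]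
    [NormedSpace 𝕜 G] (C₁ : E₁ →L[𝕜] G) (C₂ : E₂ →L[𝕜] G) (B₁ : E₁ →L[𝕜] F)
    (B₂ : E₂ →L[𝕜] F) :
    rowOperator C₁ C₂ ∘L adjoint (rowOperator B₁ B₂) = C₁ ∘L adjoint B₁ + C₂ ∘L adjoint B₂ := by
  ext y
  simp only [comp_apply, add_apply, adjoint_rowOperator_apply, rowOperator_apply,
    WithLp.toLp_fst, WithLp.toLp_snd]

end RowOperator

theorem sigma_two_char_general
    {H : Type*} [NormedAddCommGroup H] [InnerProductSpace ℂ H] [CompleteSpace H]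
    (A₁ A₂ : H →L[ℂ] H)
    (Dstar : H →L[ℂ] H) (hDstar_pos : 0 ≤ Dstar)
    (hDstar_sq : Dstar * Dstar = 1 - A₁ * adjoint A₁ - A₂ * adjoint A₂)
    (hDstar_inj : Function.Injective ⇑Dstar)
    (Arow : WithLp 2 (H × H) →L[ℂ] H)
    (hArow : ∀ x y : H, Arow ((WithLp.equiv 2 (H × H)).symm (x, y)) = A₁ x + A₂ y)
    (DA : WithLp 2 (H × H) →L[ℂ] WithLp 2 (H × H)) (hDA_pos : 0 ≤ DA)
    (hDA_sq : DA * DA = 1 - (adjoint Arow) ∘L Arow)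
    (z₁ z₂ : ℂ)
    (R : H →L[ℂ] H) (hR₁ : R * (1 - z₁ • adjoint A₁ - z₂ • adjoint A₂) = 1)
    (hR₂ : (1 - z₁ • adjoint A₁ - z₂ • adjoint A₂) * R = 1)
    (Zrow : WithLp 2 (H × H) →L[ℂ] H)
    (hZrow : ∀ x y : H, Zrow ((WithLp.equiv 2 (H × H)).symm (x, y)) = z₁ • x + z₂ • y) :
    (∃ p : H × H, (A₁ p.1 - z₁ • p.1) - (A₂ p.2 - z₂ • p.2) = 0 ∧
        ∀ h : H, p ≠ (A₁ h - z₁ • h, A₂ h - z₂ • h)) ↔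
      ∃ p : H × H, (-Arow + Dstar ∘L R ∘L Zrow ∘L DA) (DA ((WithLp.equiv 2 (H × H)).symm p)) = 0 ∧
        ∀ h : H, p ≠ (A₁ h - z₁ • h, z₂ • h - A₂ h) := by
  obtain rfl : Arow = rowOperator A₁ A₂ := eq_rowOperator hArow
  obtain rfl : Zrow = rowOperator (z₁ • 1) (z₂ • 1) := eq_rowOperator hZrow
  have hDstar : IsDefectOperator (adjoint (rowOperator A₁ A₂)) Dstar := by
    refine ⟨hDstar_pos, ?_⟩
    rw [hDstar_sq, adjoint_adjoint, rowOperator_comp_adjoint_rowOperator, sub_sub, mul_def, mul_def]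
  have hR : 1 - z₁ • adjoint A₁ - z₂ • adjoint A₂ =
      1 - rowOperator (z₁ • 1) (z₂ • 1) ∘L adjoint (rowOperator A₁ A₂) := by
    rw [rowOperator_comp_adjoint_rowOperator, sub_sub, smul_comp, smul_comp, one_def, id_comp,
      id_comp]
  have hkernel (x y : H) :
      characteristicFunction (rowOperator A₁ A₂) (rowOperator (z₁ • 1) (z₂ • 1)) Dstar R DA
          (DA ((WithLp.equiv 2 (H × H)).symm (x, -y))) = 0 ↔
        (A₁ x - z₁ • x) - (A₂ y - z₂ • y) = 0 := by
    rw [characteristicFunction_defect_apply_eq_zero_iff hDstar hDstar_inj ⟨hDA_pos, hDA_sq⟩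
      (hR ▸ hR₁) (hR ▸ hR₂), hArow, hZrow, map_neg, smul_neg, ← sub_eq_zero]
    exact Eq.congr_left (by abel)
  refine ((Equiv.refl H).prodCongr (Equiv.neg H)).exists_congr fun ⟨x, y⟩ =>
    and_congr (hkernel x y).symm (forall_congr' fun h => not_congr ?_)
  simp [neg_eq_iff_eq_neg]

theorem sigma_two_char
    {H : Type*} [NormedAddCommGroup H] [InnerProductSpace ℂ H] [CompleteSpace H]
    (A₁ A₂ : H →L[ℂ] H)
    (hcomm : A₁ * A₂ = A₂ * A₁)
    (hcontr : A₁ * adjoint A₁ + A₂ * adjoint A₂ ≤ 1)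
    (hpure : ∀ x : H, Tendsto (fun n => ((A₁ * adjoint A₁ + A₂ * adjoint A₂) ^ n) x) atTop (nhds 0))
    (Dstar : H →L[ℂ] H) (hDstar_pos : 0 ≤ Dstar)
    (hDstar_sq : Dstar * Dstar = 1 - A₁ * adjoint A₁ - A₂ * adjoint A₂)
    (hDstar_inj : Function.Injective ⇑Dstar)
    (Arow : WithLp 2 (H × H) →L[ℂ] H)
    (hArow : ∀ x y : H, Arow ((WithLp.equiv 2 (H × H)).symm (x, y)) = A₁ x + A₂ y)
    (DA : WithLp 2 (H × H) →L[ℂ] WithLp 2 (H × H)) (hDA_pos : 0 ≤ DA)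
    (hDA_sq : DA * DA = 1 - (adjoint Arow) ∘L Arow)
    (z₁ z₂ : ℂ) (hz : ‖z₁‖ ^ 2 + ‖z₂‖ ^ 2 < 1)
    (R : H →L[ℂ] H) (hR₁ : R * (1 - z₁ • adjoint A₁ - z₂ • adjoint A₂) = 1)
    (hR₂ : (1 - z₁ • adjoint A₁ - z₂ • adjoint A₂) * R = 1)
    (Zrow : WithLp 2 (H × H) →L[ℂ] H)
    (hZrow : ∀ x y : H, Zrow ((WithLp.equiv 2 (H × H)).symm (x, y)) = z₁ • x + z₂ • y) :
    (∃ p : H × H, (A₁ p.1 - z₁ • p.1) - (A₂ p.2 - z₂ • p.2) = 0 ∧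
        ∀ h : H, p ≠ (A₁ h - z₁ • h, A₂ h - z₂ • h)) ↔
      ∃ p : H × H, (-Arow + Dstar ∘L R ∘L Zrow ∘L DA) (DA ((WithLp.equiv 2 (H × H)).symm p)) = 0 ∧
        ∀ h : H, p ≠ (A₁ h - z₁ • h, z₂ • h - A₂ h) :=
  sigma_two_char_general A₁ A₂ Dstar hDstar_pos hDstar_sq hDstar_inj Arow hArow DA hDA_pos hDA_sq
    z₁ z₂ R hR₁ hR₂ Zrow hZrow
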